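/- Let m > 1 be an integer, a ∈ {0,1,…,m−1}, and ν ≥ 1 a natural number. Then S_{m,a}(2^ν) = (1/m) · Σ_{t=1}^{m−1} exp(−2πi t a / m) · Π_{k=0}^{ν−1} (1 − exp(2πi t 2^k / m)). -/

import Mathlib

/-!
With `z = ζ ^ t`, `ζ = exp (2πi/m)`, the product `∏ k < ν, (1 - z ^ 2 ^ k)` is the generating
polynomial `∑ n < 2 ^ ν, (-1) ^ s n * z ^ n` of the Thue–Morse signs (`sum_sign_mul_pow`): expanding
it chooses the set of binary digits of `n` equal to 1. Averaging this over all `m`-th roots of unity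
against `z ^ (-a)` extracts the terms with `n ≡ a (mod m)`, by orthogonality of characters
(`sum_root_pow`). The term `t = 0` may be omitted, since its product contains the factor `1 - 1`.
-/

/-- `s n` is the number of 1's in the binary expansion of `n`. -/
def s (n : ℕ) : ℕ := (Nat.digits 2 n).sum

/-- Newman-like sum `S_{m,a}(x) = Σ_{0 ≤ n < x, n ≡ a (mod m)} (−1)^{s(n)}`. -/
def S (m a x : ℕ) : ℤ :=
  ∑ n ∈ (Finset.range x).filter (fun n => n % m = a), (-1 : ℤ) ^ (s n)

theorem s_two_mul (n : ℕ) : s (2 * n) = s n := by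
  rcases Nat.eq_zero_or_pos n with rfl | h
  · rfl
  · simp [s, Nat.digits_base_mul (b := 2) (by norm_num) h]

theorem s_two_mul_add_one (n : ℕ) : s (2 * n + 1) = s n + 1 := by
  have h := Nat.digits_add_two_add_one 0 (2 * n)
  have h1 : (2 * n + 1) % 2 = 1 := by omega
  have h2 : (2 * n + 1) / 2 = n := by omega
  simp only [Nat.zero_add, h1, h2] at h
  rw [s, h, List.sum_cons, Nat.add_comm, s]

theorem sum_range_two_mul (f : ℕ → ℂ) (N : ℕ) :
    ∑ n ∈ Finset.range (2 * N), f n = ∑ n ∈ Finset.range N, (f (2 * n) + f (2 * n + 1)) := by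
  induction N with
  | zero => simp
  | succ N ih =>
    rw [show 2 * (N + 1) = 2 * N + 1 + 1 by ring, Finset.sum_range_succ, Finset.sum_range_succ,
      Finset.sum_range_succ, ih, add_assoc]

/-- Generating polynomial of the Thue–Morse signs; the induction splits off the lowest binary
digit, which replaces `z` by `z ^ 2`. -/
theorem sum_sign_mul_pow (ν : ℕ) (z : ℂ) :
    ∑ n ∈ Finset.range (2 ^ ν), (-1 : ℂ) ^ s n * z ^ n =
      ∏ k ∈ Finset.range ν, (1 - z ^ 2 ^ k) := by
  induction ν generalizing z with
  | zero => simp [s]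
  | succ ν ih =>
    have h : ∀ k, z ^ 2 ^ (k + 1) = (z ^ 2) ^ 2 ^ k := fun k => by rw [← pow_mul, pow_succ']
    rw [pow_succ', sum_range_two_mul, Finset.prod_range_succ']
    simp only [h]
    rw [← ih, Finset.sum_mul]
    refine Finset.sum_congr rfl fun n _ => ?_
    rw [s_two_mul, s_two_mul_add_one]
    ring

/-- Orthogonality of the characters of `ℤ/m`, with `m - a` standing for `-a` so that all exponents
are natural numbers. -/
theorem sum_root_pow {m a : ℕ} (ha : a < m) {ζ : ℂ} (hζ : IsPrimitiveRoot ζ m) (n : ℕ) :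
    ∑ t ∈ Finset.range m, (ζ ^ t) ^ (m - a) * (ζ ^ t) ^ n = if n % m = a then (m : ℂ) else 0 := by
  have hdvd : m ∣ m - a + n ↔ n % m = a := by
    have e : (m - a + n) + a = n + m := by omega
    rw [← Nat.modEq_zero_iff_dvd]
    constructor
    · intro h
      have h' := h.add_right a
      rw [e, zero_add] at h'
      simpa [Nat.ModEq, Nat.mod_eq_of_lt ha] using h'
    · intro h
      apply Nat.ModEq.add_right_cancel' a
      rw [e, zero_add]
      simpa [Nat.ModEq, Nat.mod_eq_of_lt ha] using h
  have e : ∀ t, (ζ ^ t) ^ (m - a) * (ζ ^ t) ^ n = (ζ ^ (m - a + n)) ^ t := fun t => by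
    rw [← pow_add, pow_right_comm]
  simp only [e]
  split_ifs with h
  · rw [(hζ.pow_eq_one_iff_dvd _).2 (hdvd.2 h)]
    simp
  · have hw : ζ ^ (m - a + n) ≠ 1 := fun h' => h (hdvd.1 ((hζ.pow_eq_one_iff_dvd _).1 h'))
    rw [geom_sum_eq hw, pow_right_comm, hζ.pow_eq_one]
    simp

/-- Formula (18): for `m > 1`, `a < m` and `ν ≥ 1`,
`S_{m,a}(2^ν) = (1/m) Σ_{t=1}^{m-1} e^{-2πi t a/m} Π_{k<ν} (1 − e^{2πi t 2^k/m})`. -/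
theorem S_two_pow_formula (m : ℕ) (hm : 1 < m) (a : ℕ) (ha : a < m)
    (ν : ℕ) (hν : 1 ≤ ν) :
    (S m a (2 ^ ν) : ℂ) =
      (1 / (m : ℂ)) * ∑ t ∈ Finset.Icc 1 (m - 1),
        Complex.exp (-(2 * Real.pi * Complex.I * t * a / m)) *
          ∏ k ∈ Finset.range ν,
            (1 - Complex.exp (2 * Real.pi * Complex.I * t * 2 ^ k / m)) := by
  have hm0 : (m : ℂ) ≠ 0 := by exact_mod_cast (by omega : m ≠ 0)
  obtain ⟨ζ, hζdef⟩ : ∃ ζ : ℂ, ζ = Complex.exp (2 * Real.pi * Complex.I / m) := ⟨_, rfl⟩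
  have hζ : IsPrimitiveRoot ζ m := hζdef ▸ Complex.isPrimitiveRoot_exp m (by omega)
  have hexp : ∀ t k : ℕ,
      Complex.exp (2 * Real.pi * Complex.I * t * 2 ^ k / m) = (ζ ^ t) ^ 2 ^ k := by
    intro t k
    rw [hζdef, ← Complex.exp_nat_mul, ← Complex.exp_nat_mul]
    congr 1
    push_cast
    ring
  have hneg : ∀ t : ℕ,
      Complex.exp (-(2 * Real.pi * Complex.I * t * a / m)) = (ζ ^ t) ^ (m - a) := by
    intro t
    have h1 : Complex.exp (2 * Real.pi * Complex.I * t * a / m) = (ζ ^ t) ^ a := by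
      rw [hζdef, ← Complex.exp_nat_mul, ← Complex.exp_nat_mul]
      congr 1
      ring
    rw [Complex.exp_neg, h1]
    refine inv_eq_of_mul_eq_one_right ?_
    rw [← pow_add, Nat.add_sub_cancel' ha.le, pow_right_comm, hζ.pow_eq_one, one_pow]
  simp only [hexp, hneg]
  have hIcc : ∑ t ∈ Finset.Icc 1 (m - 1),
        (ζ ^ t) ^ (m - a) * ∏ k ∈ Finset.range ν, (1 - (ζ ^ t) ^ 2 ^ k) =
      ∑ t ∈ Finset.range m,
        (ζ ^ t) ^ (m - a) * ∏ k ∈ Finset.range ν, (1 - (ζ ^ t) ^ 2 ^ k) := by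
    refine Finset.sum_subset (fun t ht => ?_) fun t ht ht' => ?_
    · simp only [Finset.mem_Icc, Finset.mem_range] at *
      omega
    · simp only [Finset.mem_Icc, Finset.mem_range] at *
      obtain rfl : t = 0 := by omega
      rw [Finset.prod_eq_zero (Finset.mem_range.2 hν) (by simp), mul_zero]
  rw [hIcc]
  simp only [← sum_sign_mul_pow, Finset.mul_sum]
  rw [Finset.sum_comm]
  simp only [S, Finset.sum_filter]
  push_cast
  refine Finset.sum_congr rfl fun n _ => ?_
  have h := sum_root_pow ha hζ n
  calc _ = (1 / (m : ℂ)) * (-1) ^ s n * (if n % m = a then (m : ℂ) else 0) := by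
        split_ifs
        · field_simp
        · simp
    _ = _ := by
        rw [← h, Finset.mul_sum]
        exact Finset.sum_congr rfl fun t _ => by ring
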